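/- Let K ≥ 2, τ > 0, and β ∈ ℝ^K with all β_i > 0. Define h(x) = (∑_{j=1}^K β_j/x_j^τ)^{−K} ∏_{i=1}^K x_i^{−(τ+1)}, k(x) = ∑_{j=1}^K β_j/x_j^τ, and J_0 = 1/((K−1)! τ^{K−1} ∏_{i=1}^K β_i). Then for all indices i, k, m, n: (K(K+1) β_m β_n / (J_0 (1 + δ_{mn}))) ∫_{S_K} h(x) (log x_i − log x_k)² / (k(x)² x_m^τ x_n^τ) d^{K−1}x = τ^{−2} [ δ_{imn} + δ_{kmn} + 2δ_{ikmn} − 2δ_{im}δ_{kn} − 2δ_{in}δ_{km} − (2δ_{im} + 2δ_{in} − 2δ_{km} − 2δ_{kn} − δ_{imn} + δ_{kmn})(log β_i − log β_k) + (log β_i − log β_k)² + (1 − δ_{ik}) π²/3 ], where a Kronecker delta symbol with several indices equals 1 if all its indices are equal and 0 otherwise. -/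

import Mathlib

open MeasureTheory Finset

noncomputable def fillMap (K : ℕ) (u : Fin (K - 1) → ℝ) : Fin K → ℝ :=
  fun i => if h : (i : ℕ) < K - 1 then u ⟨i, h⟩ else 1 - ∑ j, u j

/-- The `(K-1)`-dimensional Lebesgue measure on the probability simplex `S_K`. -/
noncomputable def simplexMeasure (K : ℕ) : Measure (Fin K → ℝ) :=
  Measure.map (fillMap K)
    (volume.restrict {u : Fin (K - 1) → ℝ | (∀ j, 0 ≤ u j) ∧ ∑ j, u j ≤ 1})

/-- The unnormalized Concrete density `h(x) = (∑_j β_j/x_j^τ)^{-K} ∏_i x_i^{-(τ+1)}`. -/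
noncomputable def hfun (K : ℕ) (β : Fin K → ℝ) (τ : ℝ) (x : Fin K → ℝ) : ℝ :=
  (∑ j, β j / x j ^ τ) ^ (-(K : ℝ)) * ∏ i, x i ^ (-(τ + 1))

/-- `k(x) = ∑_j β_j/x_j^τ`. -/
noncomputable def kfun (K : ℕ) (β : Fin K → ℝ) (τ : ℝ) (x : Fin K → ℝ) : ℝ :=
  ∑ j, β j / x j ^ τ

/-- `J_0 = 1/((K−1)! τ^{K−1} ∏_i β_i)`. -/
noncomputable def J0 (K : ℕ) (β : Fin K → ℝ) (τ : ℝ) : ℝ :=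
  1 / ((Nat.factorial (K - 1) : ℝ) * τ ^ (K - 1) * ∏ i, β i)

/-- Kronecker delta. -/
def kd {K : ℕ} (a b : Fin K) : ℝ := if a = b then 1 else 0

/-!
Up to normalization, the inverse Schlömilch distribution `IS(α, β, τ)` is the law of `Y / ∑ j, Y j`
for independent `Y j = G j ^ (-1 / τ)`, where `G j` is a Gamma variable of shape `α j` and rate
`β j`: writing the product density on the positive orthant in coordinates `y = s • x` with `x` in
the simplex and integrating out `s` produces the density of `IS(α, β, τ)`, together with its total
mass `(∏ j, Γ(α j) / β j ^ α j) / (τ ^ (K - 1) * Γ(∑ j, α j))`. For `∑ j, c j = 0`, multiplying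
that density by `∏ j, x j ^ (-τ * t * c j)` only shifts `α` to `α + t c`. Hence the moment
generating function of `-τ * ∑ j, c j * log (x j)` is the total mass along this line, and its second
derivative at `0` expresses the second moment by the digamma and trigamma functions. For the
integrand of the theorem, `α = 1 + e_m + e_n` and `c = e_i - e_k`, so only values at `1`, `2`
and `3` occur.
-/

section Polygamma

open Filter Topology

/-- The real digamma function, the logarithmic derivative of `Γ`; its derivative is the trigamma
function. -/
noncomputable def realDigamma : ℝ → ℝ := logDeriv Real.Gamma

lemma contDiffAt_Gamma {n : WithTop ℕ∞} {x : ℝ} (hx : 0 < x) : ContDiffAt ℝ n Real.Gamma x := by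
  have hopen : IsOpen {z : ℂ | 0 < z.re} := isOpen_lt continuous_const Complex.continuous_re
  have hdiff : DifferentiableOn ℂ Complex.Gamma {z : ℂ | 0 < z.re} := fun z hz ↦
    (Complex.differentiableAt_Gamma z fun m hm ↦ by
      simp only [hm, Set.mem_ofPred_eq, Complex.neg_re, Complex.natCast_re] at hz
      linarith [m.cast_nonneg (α := ℝ)]).differentiableWithinAt
  have hmem : (x : ℂ) ∈ {z : ℂ | 0 < z.re} := by simpa using hx
  exact (hdiff.analyticAt (hopen.mem_nhds hmem)).contDiffAt.real_of_complex

lemma hasDerivAt_log_Gamma {x : ℝ} (hx : 0 < x) :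
    HasDerivAt (fun y ↦ Real.log (Real.Gamma y)) (realDigamma x) x :=
  ((contDiffAt_Gamma (n := 1) hx).differentiableAt one_ne_zero).hasDerivAt.log
    (Real.Gamma_pos_of_pos hx).ne'

lemma differentiableAt_realDigamma {x : ℝ} (hx : 0 < x) : DifferentiableAt ℝ realDigamma x :=
  have hΓ : AnalyticAt ℝ Real.Gamma x := (contDiffAt_Gamma hx).analyticAt
  hΓ.deriv.differentiableAt.div hΓ.differentiableAt (Real.Gamma_pos_of_pos hx).ne'

lemma realDigamma_add_one {x : ℝ} (hx : 0 < x) : realDigamma (x + 1) = realDigamma x + x⁻¹ := by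
  have hshift : HasDerivAt (fun y ↦ Real.log (Real.Gamma (y + 1))) (realDigamma (x + 1)) x :=
    (hasDerivAt_log_Gamma (by positivity)).comp_add_const x 1
  have hsum : HasDerivAt (fun y ↦ Real.log (Real.Gamma y) + Real.log y)
      (realDigamma x + x⁻¹) x :=
    (hasDerivAt_log_Gamma hx).add (Real.hasDerivAt_log hx.ne')
  refine hshift.unique (hsum.congr_of_eventuallyEq ?_)
  filter_upwards [eventually_gt_nhds hx] with y hy
  rw [Real.Gamma_add_one hy.ne', Real.log_mul hy.ne' (Real.Gamma_pos_of_pos hy).ne', add_comm]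

lemma deriv_realDigamma_add_one {x : ℝ} (hx : 0 < x) :
    deriv realDigamma (x + 1) = deriv realDigamma x - (x ^ 2)⁻¹ := by
  have hsum : HasDerivAt (fun y ↦ realDigamma y + y⁻¹) (deriv realDigamma x + -(x ^ 2)⁻¹) x :=
    (differentiableAt_realDigamma hx).hasDerivAt.add (hasDerivAt_inv hx.ne')
  rw [← deriv_comp_add_const, sub_eq_add_neg, ← hsum.deriv]
  refine EventuallyEq.deriv_eq ?_
  filter_upwards [eventually_gt_nhds hx] with y hy using realDigamma_add_one hy

lemma iteratedDeriv_two_exp_comp {f f' : ℝ → ℝ} {f'' x : ℝ}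
    (hf : ∀ᶠ t in 𝓝 x, HasDerivAt f (f' t) t) (hf' : HasDerivAt f' f'' x) :
    iteratedDeriv 2 (fun t ↦ Real.exp (f t)) x = Real.exp (f x) * (f'' + f' x ^ 2) := by
  have hderiv : deriv (fun t ↦ Real.exp (f t)) =ᶠ[𝓝 x] fun t ↦ Real.exp (f t) * f' t := by
    filter_upwards [hf] with t ht using ht.exp.deriv
  rw [iteratedDeriv_succ, iteratedDeriv_one, hderiv.deriv_eq,
    (hf.self_of_nhds.exp.fun_mul hf').deriv]
  ring

lemma eventually_forall_add_mul_pos {ι : Type*} [Finite ι] {a : ι → ℝ}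
    (ha : ∀ j, 0 < a j) (c : ι → ℝ) :
    ∀ᶠ t in 𝓝 (0 : ℝ), ∀ j, 0 < a j + t * c j :=
  eventually_all.2 fun j ↦
    (ContinuousAt.eventually_lt (by fun_prop) (by fun_prop) (by simpa using ha j) :
      ∀ᶠ t in 𝓝 (0 : ℝ), (0 : ℝ) < a j + t * c j)

lemma iteratedDeriv_two_prod_Gamma_div_rpow {ι : Type*} [Fintype ι] {a b : ι → ℝ}
    (ha : ∀ j, 0 < a j) (hb : ∀ j, 0 < b j) (c : ι → ℝ) :
    iteratedDeriv 2 (fun t ↦ ∏ j, Real.Gamma (a j + t * c j) / b j ^ (a j + t * c j)) 0 =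
      (∏ j, Real.Gamma (a j) / b j ^ a j) *
        (∑ j, c j ^ 2 * deriv realDigamma (a j) +
          (∑ j, c j * (realDigamma (a j) - Real.log (b j))) ^ 2) := by
  set S : ℝ → ℝ := fun t ↦
    ∑ j, (Real.log (Real.Gamma (a j + t * c j)) - (a j + t * c j) * Real.log (b j)) with hS
  have hline (j : ι) (t : ℝ) : HasDerivAt (fun t ↦ a j + t * c j) (c j) t := by
    simpa using ((hasDerivAt_id t).mul_const (c j)).const_add (a j)
  have hexp : ∀ t, (∀ j, 0 < a j + t * c j) →
      ∏ j, Real.Gamma (a j + t * c j) / b j ^ (a j + t * c j) = Real.exp (S t) := by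
    intro t ht
    rw [hS, Real.exp_sum]
    refine prod_congr rfl fun j _ ↦ ?_
    rw [Real.exp_sub, Real.exp_log (Real.Gamma_pos_of_pos (ht j)), Real.rpow_def_of_pos (hb j),
      mul_comm (Real.log _)]
  have hS' : ∀ᶠ t in 𝓝 (0 : ℝ), HasDerivAt S
      (∑ j, c j * (realDigamma (a j + t * c j) - Real.log (b j))) t := by
    filter_upwards [eventually_forall_add_mul_pos ha c] with t ht
    refine HasDerivAt.fun_sum fun j _ ↦ ?_
    rw [mul_sub, mul_comm (c j)]
    exact ((hasDerivAt_log_Gamma (ht j)).comp t (hline j t)).sub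
      ((hline j t).mul_const (Real.log (b j)))
  have hS'' : HasDerivAt (fun t ↦ ∑ j, c j * (realDigamma (a j + t * c j) - Real.log (b j)))
      (∑ j, c j ^ 2 * deriv realDigamma (a j)) 0 := by
    refine HasDerivAt.fun_sum fun j _ ↦ ?_
    have hψ : HasDerivAt realDigamma (deriv realDigamma (a j)) (a j + 0 * c j) := by
      simpa using (differentiableAt_realDigamma (ha j)).hasDerivAt
    exact (((hψ.comp 0 (hline j 0)).sub_const (Real.log (b j))).const_mul (c j)).congr_deriv
      (by ring)
  have hexp0 := hexp 0 (by simpa using ha)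
  have hF := (eventually_forall_add_mul_pos ha c).mono hexp
  rw [EventuallyEq.iteratedDeriv_eq 2 hF, iteratedDeriv_two_exp_comp hS' hS'', ← hexp0]
  simp only [zero_mul, add_zero]

lemma Gamma_one_add_mul_Gamma_one_sub_mul_sin {t : ℝ} (h₁ : -1 < t) (h₂ : t < 1) :
    Real.Gamma (1 + t) * Real.Gamma (1 - t) * Real.sin (Real.pi * t) = Real.pi * t := by
  rcases eq_or_ne t 0 with rfl | ht
  · simp
  have hsin : Real.sin (Real.pi * t) ≠ 0 := by
    rw [Real.sin_ne_zero_iff]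
    rintro n hn
    have htn : t = n := mul_left_cancel₀ Real.pi_ne_zero (by rw [← hn, mul_comm])
    subst htn
    norm_cast at h₁ h₂ ht
    omega
  rw [add_comm 1 t, Real.Gamma_add_one ht, mul_assoc t, Real.Gamma_mul_Gamma_one_sub, mul_assoc,
    div_mul_cancel₀ _ hsin, mul_comm]

-- Third derivative at `0` of `Γ(1 + t) Γ(1 - t) sin (π t) = π t`.
lemma iteratedDeriv_two_Gamma_one_add_mul_Gamma_one_sub :
    iteratedDeriv 2 (fun t ↦ Real.Gamma (1 + t) * Real.Gamma (1 - t)) 0 = Real.pi ^ 2 / 3 := by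
  set G : ℝ → ℝ := fun t ↦ Real.Gamma (1 + t) * Real.Gamma (1 - t) with hG
  have hGsmooth : ContDiffAt ℝ 3 G 0 :=
    ((contDiffAt_Gamma (by norm_num)).comp (0 : ℝ) (by fun_prop)).mul
      ((contDiffAt_Gamma (by norm_num)).comp (0 : ℝ) (by fun_prop))
  have hGsin : (fun t ↦ G t * Real.sin (Real.pi * t)) =ᶠ[𝓝 0] fun t ↦ Real.pi * t := by
    filter_upwards [Ioo_mem_nhds (show (-1 : ℝ) < 0 by norm_num) one_pos] with t ht
    exact Gamma_one_add_mul_Gamma_one_sub_mul_sin ht.1 ht.2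
  have hthird := hGsin.iteratedDeriv_eq 3
  rw [iteratedDeriv_fun_mul hGsmooth (by fun_prop)] at hthird
  simp only [Nat.reduceAdd, iteratedDeriv_comp_const_mul Real.contDiff_sin, mul_zero,
    sum_range_succ, range_one, sum_singleton, Nat.choose_zero_right, Nat.cast_one,
    iteratedDeriv_zero, one_mul, tsub_zero, Real.iteratedDeriv_add_one_sin,
    Real.iteratedDeriv_add_one_cos, iteratedDeriv_one, Real.deriv_sin, Pi.neg_apply, Real.cos_zero,
    mul_neg, mul_one, Nat.choose_one_right, Nat.cast_ofNat, Nat.add_one_sub_one, Real.deriv_cos',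
    Real.sin_zero, neg_zero, add_zero, Nat.choose_succ_self_right, Nat.reduceSub, pow_one,
    Nat.choose_self, tsub_self, pow_zero] at hthird
  have hG0 : G 0 = 1 := by simp [hG]
  have hlinear : iteratedDeriv 3 (fun t ↦ Real.pi * t) 0 = 0 := by
    simp [iteratedDeriv_succ']
  rw [hG0, hlinear] at hthird
  have hfactored : Real.pi * (3 * iteratedDeriv 2 G 0) = Real.pi * Real.pi ^ 2 := by linarith
  linarith [mul_left_cancel₀ Real.pi_ne_zero hfactored]

lemma deriv_realDigamma_one : deriv realDigamma 1 = Real.pi ^ 2 / 6 := by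
  have h : iteratedDeriv 2 (fun t ↦ Real.Gamma (1 + t) * Real.Gamma (1 - t)) 0 =
      deriv realDigamma 1 + deriv realDigamma 1 := by
    simpa [Fin.prod_univ_two, Fin.sum_univ_two, ← sub_eq_add_neg] using
      iteratedDeriv_two_prod_Gamma_div_rpow (a := 1) (b := 1) (by simp) (by simp)
        (![1, -1] : Fin 2 → ℝ)
  linarith [iteratedDeriv_two_Gamma_one_add_mul_Gamma_one_sub]

end Polygamma

section KroneckerDelta

variable {K : ℕ}

lemma kd_self (i : Fin K) : kd i i = 1 :=
  if_pos rfl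

lemma kd_of_ne {i j : Fin K} (h : i ≠ j) : kd i j = 0 :=
  if_neg h

lemma kd_eq_zero_or_one (i j : Fin K) : kd i j = 0 ∨ kd i j = 1 :=
  (ite_eq_or_eq (i = j) 1 0).symm

lemma kd_pair_cases_of_ne {i k : Fin K} (h : i ≠ k) (m : Fin K) :
    kd i m = 0 ∧ kd k m = 0 ∨ kd i m = 1 ∧ kd k m = 0 ∨ kd i m = 0 ∧ kd k m = 1 := by
  rcases kd_eq_zero_or_one i m with hi | hi <;> rcases kd_eq_zero_or_one k m with hk | hk <;>
    simp_all [kd]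

lemma one_add_kd_add_kd_pos (j m n : Fin K) : 0 < 1 + kd j m + kd j n := by
  rcases kd_eq_zero_or_one j m with hm | hm <;> rcases kd_eq_zero_or_one j n with hn | hn <;>
    norm_num [hm, hn]

lemma sum_kd (m : Fin K) : ∑ j, kd j m = 1 := by
  simp [kd]

lemma sum_kd_sub_kd (i k : Fin K) : ∑ j, (kd j i - kd j k) = 0 := by
  rw [sum_sub_distrib, sum_kd, sum_kd, sub_self]

lemma sum_kd_sub_kd_mul (i k : Fin K) (f : Fin K → ℝ) :
    ∑ j, (kd j i - kd j k) * f j = f i - f k := by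
  simp [kd, sub_mul, sum_sub_distrib]

lemma sum_sq_kd_sub_kd_mul (i k : Fin K) (f : Fin K → ℝ) :
    ∑ j, (kd j i - kd j k) ^ 2 * f j = (1 - kd i k) * (f i + f k) := by
  rcases eq_or_ne i k with rfl | hik
  · simp [kd_self]
  have hterm (j : Fin K) : (kd j i - kd j k) ^ 2 * f j =
      (kd j i - kd j k) * ((kd j i - kd j k) * f j) := by ring
  simp only [hterm, sum_kd_sub_kd_mul, kd_self, kd_of_ne hik, kd_of_ne hik.symm]
  ring

lemma sum_one_add_kd_add_kd (m n : Fin K) : ∑ j, (1 + kd j m + kd j n) = K + 2 := by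
  simp only [sum_add_distrib, sum_kd, sum_const, card_univ, Fintype.card_fin, nsmul_eq_mul, mul_one]
  ring

lemma prod_rpow_kd (x : Fin K → ℝ) (m : Fin K) : ∏ j, x j ^ kd j m = x m := by
  simp [kd, apply_ite]

lemma Gamma_one_add_kd_add_kd (j m n : Fin K) :
    Real.Gamma (1 + kd j m + kd j n) = 1 + kd j m * kd j n := by
  rcases kd_eq_zero_or_one j m with hm | hm <;> rcases kd_eq_zero_or_one j n with hn | hn <;>
    norm_num [hm, hn, Real.Gamma_add_one]

lemma prod_Gamma_one_add_kd_add_kd (m n : Fin K) :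
    ∏ j, Real.Gamma (1 + kd j m + kd j n) = 1 + kd m n := by
  rw [prod_eq_single m, Gamma_one_add_kd_add_kd, kd_self, one_mul]
  · intro j _ hj
    rw [Gamma_one_add_kd_add_kd, kd_of_ne hj, zero_mul, add_zero]
  · exact fun h ↦ absurd (mem_univ m) h

lemma realDigamma_one_add_kd_add_kd (j m n : Fin K) :
    realDigamma (1 + kd j m + kd j n) =
      realDigamma 1 + kd j m + kd j n - kd j m * kd j n / 2 := by
  have h₁ := realDigamma_add_one one_pos
  have h₂ := realDigamma_add_one (show (0 : ℝ) < 1 + 1 by norm_num)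
  rcases kd_eq_zero_or_one j m with hm | hm <;> rcases kd_eq_zero_or_one j n with hn | hn <;>
    simp only [hm, hn, add_zero] <;> linarith

lemma deriv_realDigamma_one_add_kd_add_kd (j m n : Fin K) :
    deriv realDigamma (1 + kd j m + kd j n) =
      Real.pi ^ 2 / 6 - kd j m - kd j n + 3 / 4 * (kd j m * kd j n) := by
  have h₁ := deriv_realDigamma_add_one one_pos
  have h₂ := deriv_realDigamma_add_one (show (0 : ℝ) < 1 + 1 by norm_num)
  rcases kd_eq_zero_or_one j m with hm | hm <;> rcases kd_eq_zero_or_one j n with hn | hn <;>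
    simp only [hm, hn, add_zero] <;> linarith [deriv_realDigamma_one]

lemma one_sub_kd_mul_trigamma_add_sq_digamma_sub (i k m n : Fin K) (b b' : ℝ) :
    (1 - kd i k) *
        (deriv realDigamma (1 + kd i m + kd i n) + deriv realDigamma (1 + kd k m + kd k n)) +
      ((realDigamma (1 + kd i m + kd i n) - b) - (realDigamma (1 + kd k m + kd k n) - b')) ^ 2 =
    kd i m * kd i n + kd k m * kd k n + 2 * (kd i k * kd i m * kd i n)
      - 2 * (kd i m * kd k n) - 2 * (kd i n * kd k m)
      - (2 * kd i m + 2 * kd i n - 2 * kd k m - 2 * kd k n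
          - kd i m * kd i n + kd k m * kd k n) * (b - b')
      + (b - b') ^ 2
      + (1 - kd i k) * Real.pi ^ 2 / 3 := by
  simp only [realDigamma_one_add_kd_add_kd, deriv_realDigamma_one_add_kd_add_kd]
  rcases eq_or_ne i k with rfl | hik
  · rw [kd_self]
    ring
  rw [kd_of_ne hik]
  rcases kd_pair_cases_of_ne hik m with ⟨him, hkm⟩ | ⟨him, hkm⟩ | ⟨him, hkm⟩ <;>
  rcases kd_pair_cases_of_ne hik n with ⟨hin, hkn⟩ | ⟨hin, hkn⟩ | ⟨hin, hkn⟩ <;>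
    · rw [him, hkm, hin, hkn]
      ring

end KroneckerDelta

section SimplexIntegration

lemma volume_restrict_Ici_zero {ι : Type*} [Fintype ι] :
    (volume : Measure (ι → ℝ)).restrict (Set.Ici 0) =
      Measure.pi fun _ ↦ volume.restrict (Set.Ioi 0) := by
  rw [← Measure.restrict_pi_pi, ← volume_pi]
  exact Measure.restrict_congr_set Measure.univ_pi_Ioi_ae_eq_Ici.symm

lemma ae_restrict_Ici_zero_pos {ι : Type*} [Fintype ι] :
    ∀ᵐ y ∂(volume : Measure (ι → ℝ)).restrict (Set.Ici 0), ∀ j, 0 < y j := by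
  rw [volume_restrict_Ici_zero, ← Measure.restrict_pi_pi]
  filter_upwards [ae_restrict_mem (MeasurableSet.univ_pi fun _ ↦ measurableSet_Ioi)] with y hy j
  exact hy j (Set.mem_univ j)

variable {N : ℕ}

lemma fillMap_eq_insertNth (u : Fin N → ℝ) :
    fillMap (N + 1) u = (Fin.last N).insertNth (α := fun _ ↦ ℝ) (1 - ∑ j, u j) u := by
  funext j
  cases j using Fin.lastCases <;> simp [fillMap]

lemma measurable_fillMap : Measurable (fillMap (N + 1)) := by
  refine measurable_pi_lambda _ fun j ↦ ?_
  cases j using Fin.lastCases <;> simp only [fillMap] <;> split_ifs <;> fun_prop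

lemma fillMap_preimage_Ici_zero :
    fillMap (N + 1) ⁻¹' Set.Ici 0 = {u : Fin N → ℝ | (∀ j, 0 ≤ u j) ∧ ∑ j, u j ≤ 1} := by
  ext u
  simp [fillMap, Pi.le_def, Fin.forall_fin_succ', sub_nonneg]

instance : SFinite (simplexMeasure N) := by
  unfold simplexMeasure
  infer_instance

lemma simplexMeasure_succ :
    simplexMeasure (N + 1) = (Measure.map (fillMap (N + 1)) volume).restrict (Set.Ici 0) := by
  rw [Measure.restrict_map measurable_fillMap measurableSet_Ici, fillMap_preimage_Ici_zero]
  rfl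

lemma ae_simplexMeasure_nonneg : ∀ᵐ x ∂simplexMeasure (N + 1), 0 ≤ x := by
  rw [simplexMeasure_succ]
  exact ae_restrict_mem measurableSet_Ici

lemma measurable_insertNth_sub_sum (p : Fin (N + 1)) :
    Measurable fun q : (Fin N → ℝ) × ℝ ↦
      p.insertNth (α := fun _ ↦ ℝ) (q.2 - ∑ j, q.1 j) q.1 :=
  (MeasurableEquiv.piFinSuccAbove (fun _ : Fin (N + 1) ↦ ℝ) p).symm.measurable.comp
    (show Measurable fun q : (Fin N → ℝ) × ℝ ↦ (q.2 - ∑ j, q.1 j, q.1) by fun_prop)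

lemma lintegral_eq_lintegral_insertNth_sub_sum (p : Fin (N + 1)) {F : (Fin (N + 1) → ℝ) → ENNReal}
    (hF : Measurable F) :
    ∫⁻ y, F y = ∫⁻ s : ℝ, ∫⁻ v : Fin N → ℝ,
      F (p.insertNth (α := fun _ ↦ ℝ) (s - ∑ j, v j) v) := by
  have hsplit := (volume_preserving_piFinSuccAbove (fun _ : Fin (N + 1) ↦ ℝ) p).symm
  calc ∫⁻ y, F y
      = ∫⁻ q : ℝ × (Fin N → ℝ), F (p.insertNth (α := fun _ ↦ ℝ) q.1 q.2) :=
        (hsplit.lintegral_comp hF).symm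
    _ = ∫⁻ v : Fin N → ℝ, ∫⁻ r : ℝ, F (p.insertNth (α := fun _ ↦ ℝ) r v) :=
        lintegral_prod_symm _ (hF.comp hsplit.measurable).aemeasurable
    _ = ∫⁻ v : Fin N → ℝ, ∫⁻ s : ℝ, F (p.insertNth (α := fun _ ↦ ℝ) (s - ∑ j, v j) v) :=
        lintegral_congr fun v ↦ (lintegral_sub_right_eq_self
          (fun r ↦ F (p.insertNth (α := fun _ ↦ ℝ) r v)) (∑ j, v j)).symm
    _ = _ := lintegral_lintegral_swap (hF.comp (measurable_insertNth_sub_sum p)).aemeasurable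

lemma lintegral_insertNth_sub_sum_eq_mul_lintegral_fillMap {F : (Fin (N + 1) → ℝ) → ENNReal}
    (hF : Measurable F) {s : ℝ} (hs : 0 < s) :
    ∫⁻ v : Fin N → ℝ, F ((Fin.last N).insertNth (α := fun _ ↦ ℝ) (s - ∑ j, v j) v) =
      ENNReal.ofReal (s ^ N) * ∫⁻ x, F (s • x) ∂Measure.map (fillMap (N + 1)) volume := by
  have hFs : Measurable fun x ↦ F (s • x) := hF.comp (measurable_const_smul s)
  set H : (Fin N → ℝ) → ENNReal :=
    fun v ↦ F ((Fin.last N).insertNth (α := fun _ ↦ ℝ) (s - ∑ j, v j) v)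
  have hH : Measurable H :=
    hF.comp ((measurable_insertNth_sub_sum (Fin.last N)).comp measurable_prodMk_right)
  have hsmul (u : Fin N → ℝ) : H (s • u) = F (s • fillMap (N + 1) u) := by
    refine congrArg F (funext fun j ↦ ?_)
    cases j using Fin.lastCases <;> simp [fillMap_eq_insertNth, mul_sub, mul_sum]
  have hscale : ∫⁻ u, H (s • u) = ENNReal.ofReal (s ^ N)⁻¹ * ∫⁻ v, H v := by
    rw [← lintegral_map hH (measurable_const_smul s), Measure.map_addHaar_smul _ hs.ne',
      lintegral_smul_measure, Module.finrank_fin_fun, abs_of_pos (by positivity), smul_eq_mul]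
  have hmap : ∫⁻ x, F (s • x) ∂Measure.map (fillMap (N + 1)) volume = ∫⁻ u, H (s • u) :=
    (lintegral_map hFs measurable_fillMap).trans (lintegral_congr fun u ↦ (hsmul u).symm)
  rw [hmap, hscale, ← mul_assoc, ← ENNReal.ofReal_mul (by positivity),
    mul_inv_cancel₀ (by positivity), ENNReal.ofReal_one, one_mul]

lemma lintegral_map_fillMap_indicator_Ici_smul (G : (Fin (N + 1) → ℝ) → ENNReal) {s : ℝ}
    (hs : 0 < s) :
    ∫⁻ x, (Set.Ici 0).indicator G (s • x) ∂Measure.map (fillMap (N + 1)) volume =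
      ∫⁻ x, G (s • x) ∂simplexMeasure (N + 1) := by
  rw [simplexMeasure_succ, ← lintegral_indicator measurableSet_Ici]
  refine lintegral_congr fun x ↦ ?_
  have hmem : s • x ∈ Set.Ici 0 ↔ x ∈ Set.Ici 0 :=
    show 0 ≤ s • x ↔ 0 ≤ x from smul_nonneg_iff_nonneg_of_pos_left hs
  by_cases hx : x ∈ Set.Ici 0
  · rw [Set.indicator_of_mem hx, Set.indicator_of_mem (hmem.2 hx)]
  · rw [Set.indicator_of_notMem hx, Set.indicator_of_notMem (hmem.not.2 hx)]

lemma setLIntegral_Ici_zero_eq_lintegral_simplexMeasure {G : (Fin (N + 1) → ℝ) → ENNReal}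
    (hG : Measurable G) :
    ∫⁻ y in Set.Ici 0, G y =
      ∫⁻ x, (∫⁻ s in Set.Ioi (0 : ℝ), ENNReal.ofReal (s ^ N) * G (s • x))
        ∂simplexMeasure (N + 1) := by
  have hGmul : Measurable fun q : ℝ × (Fin (N + 1) → ℝ) ↦
      ENNReal.ofReal (q.1 ^ N) * G (q.1 • q.2) :=
    (by fun_prop : Measurable _).mul (hG.comp measurable_smul)
  set F := (Set.Ici 0).indicator G
  have hF : Measurable F := hG.indicator measurableSet_Ici
  have hneg : ∀ s < 0, ∫⁻ v : Fin N → ℝ,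
      F ((Fin.last N).insertNth (α := fun _ ↦ ℝ) (s - ∑ j, v j) v) = 0 := by
    intro s hs
    refine (lintegral_congr fun v ↦ Set.indicator_of_notMem (fun hmem ↦ ?_) G).trans
      lintegral_zero
    obtain ⟨hv, hlast⟩ : (∀ j, 0 ≤ v j) ∧ 0 ≤ s - ∑ j, v j := by
      simpa [Pi.le_def, Fin.forall_fin_succ'] using hmem
    linarith [sum_nonneg fun j (_ : j ∈ univ) ↦ hv j]
  calc ∫⁻ y in Set.Ici 0, G y
      = ∫⁻ s : ℝ, ∫⁻ v : Fin N → ℝ,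
          F ((Fin.last N).insertNth (α := fun _ ↦ ℝ) (s - ∑ j, v j) v) := by
        rw [← lintegral_indicator measurableSet_Ici,
          lintegral_eq_lintegral_insertNth_sub_sum (Fin.last N) hF]
    _ = ∫⁻ s in Set.Ioi (0 : ℝ), ∫⁻ v : Fin N → ℝ,
          F ((Fin.last N).insertNth (α := fun _ ↦ ℝ) (s - ∑ j, v j) v) := by
        rw [setLIntegral_congr Ioi_ae_eq_Ici, ← lintegral_indicator measurableSet_Ici,
          Set.indicator_eq_self.2]
        exact fun s hs ↦ not_lt.1 fun hlt ↦ hs (hneg s hlt)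
    _ = ∫⁻ s in Set.Ioi (0 : ℝ), ∫⁻ x, ENNReal.ofReal (s ^ N) * G (s • x)
          ∂simplexMeasure (N + 1) := by
        refine setLIntegral_congr_fun measurableSet_Ioi fun s hs ↦ ?_
        rw [lintegral_insertNth_sub_sum_eq_mul_lintegral_fillMap hF hs,
          lintegral_map_fillMap_indicator_Ici_smul G hs,
          ← lintegral_const_mul' _ _ ENNReal.ofReal_ne_top]
    _ = _ := lintegral_lintegral_swap hGmul.aemeasurable

lemma ae_simplexMeasure_pos : ∀ᵐ x ∂simplexMeasure (N + 1), ∀ j, 0 < x j := by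
  set Z : Set (Fin (N + 1) → ℝ) := {y | ∃ j, y j = 0} with hZ_def
  have hZ : MeasurableSet Z := by
    simp only [hZ_def, Set.ofPred_exists]
    exact MeasurableSet.iUnion fun j ↦ measurable_pi_apply j (measurableSet_singleton 0)
  have hpolar := setLIntegral_Ici_zero_eq_lintegral_simplexMeasure
    (measurable_one.indicator hZ : Measurable (Z.indicator (1 : (Fin (N + 1) → ℝ) → ENNReal)))
  have hleft : ∫⁻ y in Set.Ici 0, Z.indicator (1 : (Fin (N + 1) → ℝ) → ENNReal) y = 0 := by
    rw [lintegral_indicator_one hZ, measure_eq_zero_iff_ae_notMem]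
    filter_upwards [ae_restrict_Ici_zero_pos] with y hy
    rintro ⟨j, hj⟩
    exact (hy j).ne' hj
  have hright (x : Fin (N + 1) → ℝ) :
      ∫⁻ s in Set.Ioi (0 : ℝ), ENNReal.ofReal (s ^ N) * Z.indicator 1 (s • x) =
        (∫⁻ s in Set.Ioi (0 : ℝ), ENNReal.ofReal (s ^ N)) * Z.indicator 1 x := by
    rw [← lintegral_mul_const _ (by fun_prop)]
    refine setLIntegral_congr_fun measurableSet_Ioi fun s hs ↦ ?_
    simp [Set.indicator, hZ_def, (Set.mem_Ioi.1 hs).ne']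
  have hradial : ∫⁻ s in Set.Ioi (0 : ℝ), ENNReal.ofReal (s ^ N) ≠ 0 := by
    refine ((setLIntegral_pos_iff (by fun_prop)).2 ?_).ne'
    have hsupport : Set.Ioi (0 : ℝ) ⊆ Function.support fun s ↦ ENNReal.ofReal (s ^ N) :=
      fun s hs ↦ (ENNReal.ofReal_pos.2 (pow_pos hs N)).ne'
    simp [Set.inter_eq_right.2 hsupport]
  simp only [hleft, hright, lintegral_const_mul _ (measurable_one.indicator hZ),
    lintegral_indicator_one hZ] at hpolar
  have hnull : simplexMeasure (N + 1) Z = 0 :=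
    (mul_eq_zero.1 hpolar.symm).resolve_left hradial
  filter_upwards [ae_simplexMeasure_nonneg, measure_eq_zero_iff_ae_notMem.1 hnull] with x hx hxZ j
  exact (hx j).lt_of_ne fun h ↦ hxZ ⟨j, h.symm⟩

end SimplexIntegration

section InverseSchlomilch

/-- The unnormalized density on `(0, ∞)` of `Y = G ^ (-1 / τ)` for a Gamma variable `G` of shape
`a` and rate `b`. Independent `Y j` of this kind project to the inverse Schlömilch distribution
on the simplex. -/
noncomputable def invGammaKernel (τ a b y : ℝ) : ℝ :=
  y ^ (-(τ * a + 1)) * Real.exp (-(b * y ^ (-τ)))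

/-- The unnormalized density of the inverse Schlömilch distribution `IS(α, β, τ)` on the
simplex. -/
noncomputable def invSchlomilchWeight {K : ℕ} (τ : ℝ) (α β x : Fin K → ℝ) : ℝ :=
  (∏ j, x j ^ (-(τ * α j + 1))) * kfun K β τ x ^ (-∑ j, α j)

/-- The total mass of `invSchlomilchWeight` in closed form; see `integral_invSchlomilchWeight`. -/
noncomputable def invSchlomilchMass {K : ℕ} (τ : ℝ) (α β : Fin K → ℝ) : ℝ :=
  (∏ j, Real.Gamma (α j) / β j ^ α j) / (τ ^ (K - 1) * Real.Gamma (∑ j, α j))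

lemma invGammaKernel_nonneg (τ a b : ℝ) {y : ℝ} (hy : 0 ≤ y) : 0 ≤ invGammaKernel τ a b y :=
  mul_nonneg (Real.rpow_nonneg hy _) (Real.exp_nonneg _)

@[fun_prop]
lemma measurable_invGammaKernel (τ a b : ℝ) : Measurable (invGammaKernel τ a b) := by
  unfold invGammaKernel
  fun_prop

variable {τ : ℝ}

section Kernel

variable {a b : ℝ}

lemma invGammaKernel_eq_comp_rpow (hτ : 0 < τ) (a b : ℝ) {y : ℝ} (hy : 0 < y) :
    invGammaKernel τ a b y =
      τ⁻¹ * ((|-τ| * y ^ (-τ - 1)) •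
        (fun g ↦ g ^ (a - 1) * Real.exp (-(b * g))) (y ^ (-τ))) := by
  have hexp : y ^ (-(τ * a + 1)) = y ^ (-τ - 1) * (y ^ (-τ)) ^ (a - 1) := by
    rw [← Real.rpow_mul hy.le, ← Real.rpow_add hy]
    ring_nf
  simp only [invGammaKernel, hexp, abs_neg, abs_of_pos hτ, smul_eq_mul]
  field_simp

lemma integrableOn_invGammaKernel (hτ : 0 < τ) (ha : 0 < a) (hb : 0 < b) :
    IntegrableOn (invGammaKernel τ a b) (Set.Ioi 0) := by
  have hgamma : IntegrableOn (fun g ↦ g ^ (a - 1) * Real.exp (-(b * g))) (Set.Ioi 0) := by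
    simpa using integrableOn_rpow_mul_exp_neg_mul_rpow (show -1 < a - 1 by linarith) one_pos hb
  refine IntegrableOn.congr_fun
    (((integrableOn_Ioi_comp_rpow_iff _ (neg_ne_zero.2 hτ.ne')).2 hgamma).const_mul τ⁻¹)
    (fun y hy ↦ (invGammaKernel_eq_comp_rpow hτ a b hy).symm) measurableSet_Ioi

lemma integral_invGammaKernel (hτ : 0 < τ) (ha : 0 < a) (hb : 0 < b) :
    ∫ y in Set.Ioi 0, invGammaKernel τ a b y = τ⁻¹ * (Real.Gamma a / b ^ a) := by
  rw [setIntegral_congr_fun measurableSet_Ioi fun y hy ↦ invGammaKernel_eq_comp_rpow hτ a b hy,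
    integral_const_mul, integral_comp_rpow_Ioi (fun g ↦ g ^ (a - 1) * Real.exp (-(b * g)))
      (neg_ne_zero.2 hτ.ne'),
    Real.integral_rpow_mul_exp_neg_mul_Ioi ha hb, Real.div_rpow zero_le_one hb.le, Real.one_rpow]
  ring

lemma setLIntegral_invGammaKernel (hτ : 0 < τ) (ha : 0 < a) (hb : 0 < b) :
    ∫⁻ y in Set.Ioi 0, ENNReal.ofReal (invGammaKernel τ a b y) =
      ENNReal.ofReal (τ⁻¹ * (Real.Gamma a / b ^ a)) := by
  rw [← integral_invGammaKernel hτ ha hb,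
    ofReal_integral_eq_lintegral_ofReal (integrableOn_invGammaKernel hτ ha hb)]
  filter_upwards [ae_restrict_mem measurableSet_Ioi] with y hy
  exact invGammaKernel_nonneg τ a b (Set.mem_Ioi.1 hy).le

lemma setLIntegral_prod_invGammaKernel {ι : Type*} [Fintype ι] (hτ : 0 < τ) {α β : ι → ℝ}
    (hα : ∀ j, 0 < α j) (hβ : ∀ j, 0 < β j) :
    ∫⁻ y in Set.Ici (0 : ι → ℝ), ENNReal.ofReal (∏ j, invGammaKernel τ (α j) (β j) (y j)) =
      ENNReal.ofReal (∏ j, τ⁻¹ * (Real.Gamma (α j) / β j ^ α j)) := by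
  have hint : Integrable (fun y : ι → ℝ ↦ ∏ j, invGammaKernel τ (α j) (β j) (y j))
      (Measure.pi fun _ ↦ volume.restrict (Set.Ioi 0)) :=
    Integrable.fintype_prod_dep fun j ↦ integrableOn_invGammaKernel hτ (hα j) (hβ j)
  have hnonneg : ∀ᵐ y ∂(volume : Measure (ι → ℝ)).restrict (Set.Ici 0),
      0 ≤ ∏ j, invGammaKernel τ (α j) (β j) (y j) := by
    filter_upwards [ae_restrict_Ici_zero_pos] with y hy
    exact prod_nonneg fun j _ ↦ invGammaKernel_nonneg τ (α j) (β j) (hy j).le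
  rw [volume_restrict_Ici_zero] at hnonneg ⊢
  rw [← ofReal_integral_eq_lintegral_ofReal hint hnonneg, integral_fintype_prod_eq_prod]
  simp only [integral_invGammaKernel hτ (hα _) (hβ _)]

end Kernel

variable {K N : ℕ} {α β : Fin K → ℝ}

lemma kfun_pos [NeZero K] (hβ : ∀ j, 0 < β j) {x : Fin K → ℝ} (hx : ∀ j, 0 < x j) :
    0 < kfun K β τ x :=
  sum_pos (fun j _ ↦ div_pos (hβ j) (Real.rpow_pos_of_pos (hx j) τ)) univ_nonempty

lemma pow_mul_prod_invGammaKernel_smul (τ : ℝ) (α β : Fin (N + 1) → ℝ) {x : Fin (N + 1) → ℝ}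
    (hx : ∀ j, 0 < x j) {s : ℝ} (hs : 0 < s) :
    s ^ N * ∏ j, invGammaKernel τ (α j) (β j) ((s • x) j) =
      (∏ j, x j ^ (-(τ * α j + 1))) * invGammaKernel τ (∑ j, α j) (kfun (N + 1) β τ x) s := by
  have hfactor (j : Fin (N + 1)) : invGammaKernel τ (α j) (β j) ((s • x) j) =
      x j ^ (-(τ * α j + 1)) * s ^ (-(τ * α j + 1)) *
        Real.exp (-(β j / x j ^ τ * s ^ (-τ))) := by
    rw [invGammaKernel, Pi.smul_apply, smul_eq_mul, Real.mul_rpow hs.le (hx j).le,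
      Real.mul_rpow hs.le (hx j).le, Real.rpow_neg (hx j).le τ]
    ring_nf
  have hpow : s ^ N * ∏ j, s ^ (-(τ * α j + 1)) = s ^ (-(τ * ∑ j, α j + 1)) := by
    rw [← Real.rpow_natCast, ← Real.rpow_sum_of_pos hs, ← Real.rpow_add hs]
    simp only [sum_neg_distrib, sum_add_distrib, ← mul_sum, sum_const, card_univ, Fintype.card_fin,
      nsmul_eq_mul, Nat.cast_add, Nat.cast_one]
    ring_nf
  have hexp : ∏ j, Real.exp (-(β j / x j ^ τ * s ^ (-τ))) =
      Real.exp (-(kfun (N + 1) β τ x * s ^ (-τ))) := by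
    rw [← Real.exp_sum, sum_neg_distrib, ← sum_mul, kfun]
  rw [prod_congr rfl fun j _ ↦ hfactor j, prod_mul_distrib, prod_mul_distrib, hexp, invGammaKernel,
    ← hpow]
  ring

lemma setLIntegral_pow_mul_prod_invGammaKernel_smul (hτ : 0 < τ) {α β : Fin (N + 1) → ℝ}
    (hα : 0 < ∑ j, α j) (hβ : ∀ j, 0 < β j) {x : Fin (N + 1) → ℝ} (hx : ∀ j, 0 < x j) :
    ∫⁻ s in Set.Ioi (0 : ℝ), ENNReal.ofReal (s ^ N) *
        ENNReal.ofReal (∏ j, invGammaKernel τ (α j) (β j) ((s • x) j)) =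
      ENNReal.ofReal (invSchlomilchWeight τ α β x) *
        ENNReal.ofReal (τ⁻¹ * Real.Gamma (∑ j, α j)) := by
  have hk : 0 < kfun (N + 1) β τ x := kfun_pos hβ hx
  have hprod : 0 ≤ ∏ j, x j ^ (-(τ * α j + 1)) :=
    prod_nonneg fun j _ ↦ Real.rpow_nonneg (hx j).le _
  have hweight : (∏ j, x j ^ (-(τ * α j + 1))) *
      (τ⁻¹ * (Real.Gamma (∑ j, α j) / kfun (N + 1) β τ x ^ ∑ j, α j)) =
        invSchlomilchWeight τ α β x * (τ⁻¹ * Real.Gamma (∑ j, α j)) := by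
    rw [invSchlomilchWeight, Real.rpow_neg hk.le]
    ring
  calc ∫⁻ s in Set.Ioi (0 : ℝ), ENNReal.ofReal (s ^ N) *
        ENNReal.ofReal (∏ j, invGammaKernel τ (α j) (β j) ((s • x) j))
      = ∫⁻ s in Set.Ioi (0 : ℝ), ENNReal.ofReal (∏ j, x j ^ (-(τ * α j + 1))) *
          ENNReal.ofReal (invGammaKernel τ (∑ j, α j) (kfun (N + 1) β τ x) s) := by
        refine setLIntegral_congr_fun measurableSet_Ioi fun s hs ↦ ?_
        rw [← ENNReal.ofReal_mul (pow_nonneg (Set.mem_Ioi.1 hs).le N),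
          pow_mul_prod_invGammaKernel_smul τ α β hx hs, ENNReal.ofReal_mul hprod]
    _ = _ := by
        rw [lintegral_const_mul _ (by fun_prop), setLIntegral_invGammaKernel hτ hα hk,
          ← ENNReal.ofReal_mul hprod, hweight,
          ENNReal.ofReal_mul' (mul_pos (inv_pos.2 hτ) (Real.Gamma_pos_of_pos hα)).le]

lemma lintegral_invSchlomilchWeight (hτ : 0 < τ) {α β : Fin (N + 1) → ℝ} (hα : ∀ j, 0 < α j)
    (hβ : ∀ j, 0 < β j) :
    ∫⁻ x, ENNReal.ofReal (invSchlomilchWeight τ α β x) ∂simplexMeasure (N + 1) =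
      ENNReal.ofReal (invSchlomilchMass τ α β) := by
  have hsum : 0 < ∑ j, α j := sum_pos (fun j _ ↦ hα j) univ_nonempty
  set C := τ⁻¹ * Real.Gamma (∑ j, α j) with hC_def
  have hC : 0 < C := mul_pos (inv_pos.2 hτ) (Real.Gamma_pos_of_pos hsum)
  have hpolar : ENNReal.ofReal (∏ j, τ⁻¹ * (Real.Gamma (α j) / β j ^ α j)) =
      (∫⁻ x, ENNReal.ofReal (invSchlomilchWeight τ α β x) ∂simplexMeasure (N + 1)) *
        ENNReal.ofReal C := by
    rw [← setLIntegral_prod_invGammaKernel hτ hα hβ,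
      setLIntegral_Ici_zero_eq_lintegral_simplexMeasure (by fun_prop),
      ← lintegral_mul_const' _ _ ENNReal.ofReal_ne_top]
    refine lintegral_congr_ae ?_
    filter_upwards [ae_simplexMeasure_pos] with x hx
    exact setLIntegral_pow_mul_prod_invGammaKernel_smul hτ hsum hβ hx
  have hfactor : ∏ j, τ⁻¹ * (Real.Gamma (α j) / β j ^ α j) = invSchlomilchMass τ α β * C := by
    have hΓ := (Real.Gamma_pos_of_pos hsum).ne'
    rw [prod_mul_distrib, prod_const, card_univ, Fintype.card_fin, invSchlomilchMass, hC_def,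
      Nat.add_sub_cancel, inv_pow, pow_succ]
    field_simp
  rw [hfactor, ENNReal.ofReal_mul' hC.le] at hpolar
  exact ((ENNReal.mul_left_inj (ENNReal.ofReal_pos.2 hC).ne' ENNReal.ofReal_ne_top).1 hpolar).symm

@[fun_prop]
lemma measurable_invSchlomilchWeight (τ : ℝ) (α β : Fin K → ℝ) :
    Measurable (invSchlomilchWeight τ α β) := by
  unfold invSchlomilchWeight kfun
  fun_prop

lemma invSchlomilchWeight_nonneg [NeZero K] (hβ : ∀ j, 0 < β j) {x : Fin K → ℝ}
    (hx : ∀ j, 0 < x j) : 0 ≤ invSchlomilchWeight τ α β x :=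
  mul_nonneg (prod_nonneg fun j _ ↦ Real.rpow_nonneg (hx j).le _)
    (Real.rpow_nonneg (kfun_pos hβ hx).le _)

lemma invSchlomilchMass_pos [NeZero K] (hτ : 0 < τ) (hα : ∀ j, 0 < α j) (hβ : ∀ j, 0 < β j) :
    0 < invSchlomilchMass τ α β :=
  div_pos
    (prod_pos fun j _ ↦ div_pos (Real.Gamma_pos_of_pos (hα j)) (Real.rpow_pos_of_pos (hβ j) _))
    (mul_pos (pow_pos hτ _)
      (Real.Gamma_pos_of_pos (sum_pos (fun j _ ↦ hα j) univ_nonempty)))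

lemma integrable_invSchlomilchWeight (hτ : 0 < τ) {α β : Fin (N + 1) → ℝ} (hα : ∀ j, 0 < α j)
    (hβ : ∀ j, 0 < β j) :
    Integrable (invSchlomilchWeight τ α β) (simplexMeasure (N + 1)) := by
  refine (lintegral_ofReal_ne_top_iff_integrable (by fun_prop) ?_).1 ?_
  · filter_upwards [ae_simplexMeasure_pos] with x hx using invSchlomilchWeight_nonneg hβ hx
  · rw [lintegral_invSchlomilchWeight hτ hα hβ]
    exact ENNReal.ofReal_ne_top

lemma integral_invSchlomilchWeight (hτ : 0 < τ) {α β : Fin (N + 1) → ℝ} (hα : ∀ j, 0 < α j)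
    (hβ : ∀ j, 0 < β j) :
    ∫ x, invSchlomilchWeight τ α β x ∂simplexMeasure (N + 1) = invSchlomilchMass τ α β := by
  rw [integral_eq_lintegral_of_nonneg_ae, lintegral_invSchlomilchWeight hτ hα hβ,
    ENNReal.toReal_ofReal (invSchlomilchMass_pos hτ hα hβ).le]
  · filter_upwards [ae_simplexMeasure_pos] with x hx using invSchlomilchWeight_nonneg hβ hx
  · fun_prop

lemma invSchlomilchWeight_mul_exp {c : Fin K → ℝ} (hc : ∑ j, c j = 0) (τ : ℝ) (α β : Fin K → ℝ)
    {x : Fin K → ℝ} (hx : ∀ j, 0 < x j) (t : ℝ) :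
    invSchlomilchWeight τ α β x * Real.exp (t * -(τ * ∑ j, c j * Real.log (x j))) =
      invSchlomilchWeight τ (fun j ↦ α j + t * c j) β x := by
  have hsum : ∑ j, (α j + t * c j) = ∑ j, α j := by
    rw [sum_add_distrib, ← mul_sum, hc, mul_zero, add_zero]
  have hexp : Real.exp (t * -(τ * ∑ j, c j * Real.log (x j))) =
      ∏ j, x j ^ (-(τ * (t * c j))) := by
    rw [mul_sum, ← sum_neg_distrib, mul_sum, Real.exp_sum]
    refine prod_congr rfl fun j _ ↦ ?_
    rw [Real.rpow_def_of_pos (hx j)]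
    ring_nf
  have hprod : ∏ j, x j ^ (-(τ * (α j + t * c j) + 1)) =
      (∏ j, x j ^ (-(τ * α j + 1))) * ∏ j, x j ^ (-(τ * (t * c j))) := by
    rw [← prod_mul_distrib]
    refine prod_congr rfl fun j _ ↦ ?_
    rw [← Real.rpow_add (hx j)]
    ring_nf
  rw [invSchlomilchWeight, invSchlomilchWeight, hsum, hexp, hprod]
  ring

lemma iteratedDeriv_two_invSchlomilchMass (hα : ∀ j, 0 < α j) (hβ : ∀ j, 0 < β j)
    {c : Fin K → ℝ} (hc : ∑ j, c j = 0) :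
    iteratedDeriv 2 (fun t ↦ invSchlomilchMass τ (fun j ↦ α j + t * c j) β) 0 =
      invSchlomilchMass τ α β * (∑ j, c j ^ 2 * deriv realDigamma (α j) +
        (∑ j, c j * (realDigamma (α j) - Real.log (β j))) ^ 2) := by
  have hsum (t : ℝ) : ∑ j, (α j + t * c j) = ∑ j, α j := by
    rw [sum_add_distrib, ← mul_sum, hc, mul_zero, add_zero]
  simp only [invSchlomilchMass, hsum]
  rw [iteratedDeriv_div_const, iteratedDeriv_two_prod_Gamma_div_rpow hα hβ]
  ring

/-- The unnormalized inverse Schlömilch distribution `IS(α, β, τ)`. -/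
noncomputable def invSchlomilchMeasure {K : ℕ} (τ : ℝ) (α β : Fin K → ℝ) :
    Measure (Fin K → ℝ) :=
  (simplexMeasure K).withDensity fun x ↦ ENNReal.ofReal (invSchlomilchWeight τ α β x)

lemma integral_invSchlomilchMeasure {α β : Fin (N + 1) → ℝ} (hβ : ∀ j, 0 < β j)
    (f : (Fin (N + 1) → ℝ) → ℝ) :
    ∫ x, f x ∂invSchlomilchMeasure τ α β =
      ∫ x, invSchlomilchWeight τ α β x * f x ∂simplexMeasure (N + 1) := by
  rw [invSchlomilchMeasure, integral_withDensity_eq_integral_toReal_smul (by fun_prop)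
    (ae_of_all _ fun x ↦ ENNReal.ofReal_lt_top)]
  refine integral_congr_ae ?_
  filter_upwards [ae_simplexMeasure_pos] with x hx
  rw [ENNReal.toReal_ofReal (invSchlomilchWeight_nonneg hβ hx), smul_eq_mul]

lemma integrable_invSchlomilchMeasure_iff {α β : Fin (N + 1) → ℝ} (hβ : ∀ j, 0 < β j)
    {f : (Fin (N + 1) → ℝ) → ℝ} :
    Integrable f (invSchlomilchMeasure τ α β) ↔
      Integrable (fun x ↦ invSchlomilchWeight τ α β x * f x) (simplexMeasure (N + 1)) := by
  rw [invSchlomilchMeasure, integrable_withDensity_iff_integrable_smul' (by fun_prop)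
    (ae_of_all _ fun x ↦ ENNReal.ofReal_lt_top)]
  refine integrable_congr ?_
  filter_upwards [ae_simplexMeasure_pos] with x hx
  rw [ENNReal.toReal_ofReal (invSchlomilchWeight_nonneg hβ hx), smul_eq_mul]

section LogContrast

variable {α β c : Fin (N + 1) → ℝ} {t : ℝ}

open ProbabilityTheory

lemma integrable_exp_logContrast (hτ : 0 < τ) (hβ : ∀ j, 0 < β j) (hc : ∑ j, c j = 0)
    (ht : ∀ j, 0 < α j + t * c j) :
    Integrable (fun x ↦ Real.exp (t * -(τ * ∑ j, c j * Real.log (x j))))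
      (invSchlomilchMeasure τ α β) := by
  rw [integrable_invSchlomilchMeasure_iff hβ]
  refine (integrable_invSchlomilchWeight hτ ht hβ).congr ?_
  filter_upwards [ae_simplexMeasure_pos] with x hx
  exact (invSchlomilchWeight_mul_exp hc τ α β hx t).symm

lemma mgf_logContrast (hτ : 0 < τ) (hβ : ∀ j, 0 < β j) (hc : ∑ j, c j = 0)
    (ht : ∀ j, 0 < α j + t * c j) :
    mgf (fun x ↦ -(τ * ∑ j, c j * Real.log (x j))) (invSchlomilchMeasure τ α β) t =
      invSchlomilchMass τ (fun j ↦ α j + t * c j) β := by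
  rw [mgf, integral_invSchlomilchMeasure hβ, ← integral_invSchlomilchWeight hτ ht hβ]
  refine integral_congr_ae ?_
  filter_upwards [ae_simplexMeasure_pos] with x hx
  exact invSchlomilchWeight_mul_exp hc τ α β hx t

lemma integral_sq_logContrast (hτ : 0 < τ) (hα : ∀ j, 0 < α j) (hβ : ∀ j, 0 < β j)
    (hc : ∑ j, c j = 0) :
    ∫ x, (∑ j, c j * Real.log (x j)) ^ 2 ∂invSchlomilchMeasure τ α β =
      τ⁻¹ ^ 2 * invSchlomilchMass τ α β * (∑ j, c j ^ 2 * deriv realDigamma (α j) +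
        (∑ j, c j * (realDigamma (α j) - Real.log (β j))) ^ 2) := by
  set X : (Fin (N + 1) → ℝ) → ℝ := fun x ↦ -(τ * ∑ j, c j * Real.log (x j)) with hX
  have hpos := eventually_forall_add_mul_pos hα c
  have hinterior : 0 ∈ interior (integrableExpSet X (invSchlomilchMeasure τ α β)) :=
    mem_interior_iff_mem_nhds.2 <| hpos.mono fun t ht ↦ integrable_exp_logContrast hτ hβ hc ht
  have hmgf : mgf X (invSchlomilchMeasure τ α β) =ᶠ[nhds 0]
      fun t ↦ invSchlomilchMass τ (fun j ↦ α j + t * c j) β :=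
    hpos.mono fun t ht ↦ mgf_logContrast hτ hβ hc ht
  calc ∫ x, (∑ j, c j * Real.log (x j)) ^ 2 ∂invSchlomilchMeasure τ α β
      = τ⁻¹ ^ 2 * ∫ x, (X ^ 2) x ∂invSchlomilchMeasure τ α β := by
        rw [← integral_const_mul]
        refine integral_congr_ae (ae_of_all _ fun x ↦ ?_)
        simp only [hX, Pi.pow_apply]
        field_simp
    _ = τ⁻¹ ^ 2 * iteratedDeriv 2 (fun t ↦ invSchlomilchMass τ (fun j ↦ α j + t * c j) β) 0 := by
        rw [← iteratedDeriv_mgf_zero hinterior, hmgf.iteratedDeriv_eq]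
    _ = _ := by
        rw [iteratedDeriv_two_invSchlomilchMass hα hβ hc, mul_assoc]

end LogContrast

lemma integral_sq_log_sub_log (hτ : 0 < τ) {α β : Fin (N + 1) → ℝ} (hα : ∀ j, 0 < α j)
    (hβ : ∀ j, 0 < β j) (i k : Fin (N + 1)) :
    ∫ x, (Real.log (x i) - Real.log (x k)) ^ 2 ∂invSchlomilchMeasure τ α β =
      τ⁻¹ ^ 2 * invSchlomilchMass τ α β *
        ((1 - kd i k) * (deriv realDigamma (α i) + deriv realDigamma (α k)) +
          ((realDigamma (α i) - Real.log (β i)) - (realDigamma (α k) - Real.log (β k))) ^ 2) := by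
  simpa only [sum_kd_sub_kd_mul i k fun _ ↦ Real.log _, sum_kd_sub_kd_mul, sum_sq_kd_sub_kd_mul]
    using integral_sq_logContrast hτ hα hβ (sum_kd_sub_kd i k)

lemma hfun_div_eq_invSchlomilchWeight [NeZero K] (hβ : ∀ j, 0 < β j) {x : Fin K → ℝ}
    (hx : ∀ j, 0 < x j) (m n : Fin K) :
    hfun K β τ x / (kfun K β τ x ^ 2 * x m ^ τ * x n ^ τ) =
      invSchlomilchWeight τ (fun j ↦ 1 + kd j m + kd j n) β x := by
  have hk : 0 < kfun K β τ x := kfun_pos hβ hx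
  have hkpow : kfun K β τ x ^ (-(K + 2 : ℝ)) = kfun K β τ x ^ (-(K : ℝ)) / kfun K β τ x ^ 2 := by
    rw [neg_add, Real.rpow_add hk, Real.rpow_neg hk.le 2, Real.rpow_two, div_eq_mul_inv]
  have hfactor (j : Fin K) : x j ^ (-(τ * (1 + kd j m + kd j n) + 1)) =
      x j ^ (-(τ + 1)) * ((x j ^ kd j m) ^ τ)⁻¹ * ((x j ^ kd j n) ^ τ)⁻¹ := by
    rw [← Real.rpow_mul (hx j).le, ← Real.rpow_mul (hx j).le, ← Real.rpow_neg (hx j).le,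
      ← Real.rpow_neg (hx j).le, ← Real.rpow_add (hx j), ← Real.rpow_add (hx j)]
    ring_nf
  have hprod (p : Fin K) : ∏ j, ((x j ^ kd j p) ^ τ)⁻¹ = (x p ^ τ)⁻¹ := by
    rw [prod_inv_distrib, Real.finsetProd_rpow _ _ fun j _ ↦ Real.rpow_nonneg (hx j).le _,
      prod_rpow_kd]
  rw [invSchlomilchWeight, sum_one_add_kd_add_kd, hkpow, prod_congr rfl fun j _ ↦ hfactor j,
    prod_mul_distrib, prod_mul_distrib, hprod, hprod, hfun, ← kfun]
  field_simp

lemma integral_hfun_mul_div {β : Fin (N + 1) → ℝ} (hβ : ∀ j, 0 < β j) (m n : Fin (N + 1))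
    (f : (Fin (N + 1) → ℝ) → ℝ) :
    ∫ x, hfun (N + 1) β τ x * f x / (kfun (N + 1) β τ x ^ 2 * x m ^ τ * x n ^ τ)
        ∂simplexMeasure (N + 1) =
      ∫ x, f x ∂invSchlomilchMeasure τ (fun j ↦ 1 + kd j m + kd j n) β := by
  rw [integral_invSchlomilchMeasure hβ]
  refine integral_congr_ae ?_
  filter_upwards [ae_simplexMeasure_pos] with x hx
  rw [mul_div_right_comm, hfun_div_eq_invSchlomilchWeight hβ hx]

lemma invSchlomilchMass_one_add_kd_add_kd (hβ : ∀ j, 0 < β j) (m n : Fin K) :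
    invSchlomilchMass τ (fun j ↦ 1 + kd j m + kd j n) β =
      J0 K β τ * (1 + kd m n) / (K * (K + 1) * β m * β n) := by
  obtain ⟨N, rfl⟩ := Nat.exists_eq_add_one_of_ne_zero m.pos.ne'
  have hΓ : Real.Gamma (((N + 1 : ℕ) : ℝ) + 2) = (N + 1 + 1) * ((N + 1) * N.factorial) := by
    rw [show ((N + 1 : ℕ) : ℝ) + 2 = ((N + 2 : ℕ) : ℝ) + 1 by push_cast; ring,
      Real.Gamma_nat_eq_factorial, Nat.factorial_succ, Nat.factorial_succ]
    push_cast
    ring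
  have hprod : ∏ j, β j ^ (1 + kd j m + kd j n) = (∏ j, β j) * β m * β n := by
    simp only [Real.rpow_add (hβ _), Real.rpow_one, prod_mul_distrib, prod_rpow_kd]
  rw [invSchlomilchMass, prod_div_distrib, prod_Gamma_one_add_kd_add_kd, hprod,
    sum_one_add_kd_add_kd, hΓ, J0, Nat.add_sub_cancel]
  push_cast
  field_simp

end InverseSchlomilch

/-- Raw log-ratio second moments `E[log(X_i/X_k)²]` of the inverse Schlömilch
distribution `IS(1 + e_m + e_n, β, τ)`.  (A Kronecker delta with several indices,
e.g. `δ_{imn} = kd i m * kd i n`, equals 1 iff all its indices coincide.) -/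
theorem is_special_raw_second_moment_squared
    (K : ℕ) (hK : 2 ≤ K) (τ : ℝ) (hτ : 0 < τ)
    (β : Fin K → ℝ) (hβ : ∀ i, 0 < β i) (i k m n : Fin K) :
    ((K : ℝ) * ((K : ℝ) + 1) * β m * β n / (J0 K β τ * (1 + kd m n))) *
      ∫ x, hfun K β τ x * (Real.log (x i) - Real.log (x k)) ^ 2 /
          (kfun K β τ x ^ 2 * x m ^ τ * x n ^ τ) ∂(simplexMeasure K)
      = τ⁻¹ ^ 2 *
          (kd i m * kd i n + kd k m * kd k n + 2 * (kd i k * kd i m * kd i n)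
            - 2 * (kd i m * kd k n) - 2 * (kd i n * kd k m)
            - (2 * kd i m + 2 * kd i n - 2 * kd k m - 2 * kd k n
                - kd i m * kd i n + kd k m * kd k n) *
              (Real.log (β i) - Real.log (β k))
            + (Real.log (β i) - Real.log (β k)) ^ 2
            + (1 - kd i k) * Real.pi ^ 2 / 3) := by
  obtain ⟨N, rfl⟩ := Nat.exists_eq_add_one_of_ne_zero (show K ≠ 0 by omega)
  set α : Fin (N + 1) → ℝ := fun j ↦ 1 + kd j m + kd j n
  have hα : ∀ j, 0 < α j := fun j ↦ one_add_kd_add_kd_pos j m n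
  have hnormalized : ((N + 1 : ℕ) : ℝ) * (((N + 1 : ℕ) : ℝ) + 1) * β m * β n /
      (J0 (N + 1) β τ * (1 + kd m n)) * invSchlomilchMass τ α β = 1 := by
    rw [← inv_div, ← invSchlomilchMass_one_add_kd_add_kd hβ,
      inv_mul_cancel₀ (invSchlomilchMass_pos hτ hα hβ).ne']
  rw [integral_hfun_mul_div hβ, integral_sq_log_sub_log hτ hα hβ, mul_assoc (τ⁻¹ ^ 2),
    mul_left_comm, ← mul_assoc (_ / _), hnormalized, one_mul,
    one_sub_kd_mul_trigamma_add_sq_digamma_sub]
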